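/- Fix integers n ≥ 2 and k with 1 ≤ k ≤ n−1, and set v₀ := 2·cos(kπ/n). For (x,y,z) ∈ ℂ³ satisfying x² + y² + z² − xyz − 2 = v₀, let τ := (2 − x − y + z)·S_{n−1}(v₀) + (4 − 2x − 2y + xy)·P_{n−2}(v₀). Then: if k is even, τ = 0 for every such (x,y,z); and if k is odd, τ = 0 if and only if x = 2 or y = 2. -/

import Mathlib

/-!
With `θ = kπ/n`, the identity `S_j(2 cos θ) · sin θ = sin((j+1)θ)` together with `sin θ ≠ 0` gives
`S_{n-1}(v₀) = 0` and `S_{n-2}(v₀) = -(-1)^k`. Hence `(v₀ - 2) · P_{n-2}(v₀) = (-1)^k - 1`, where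
`v₀ ≠ 2`, so `P_{n-2}(v₀)` vanishes for even `k` and is nonzero for odd `k`. Since
`4 - 2x - 2y + xy = (x - 2)(y - 2)`, the torsion reduces to `(x - 2)(y - 2) · P_{n-2}(v₀)`.
-/


open Polynomial

/-- The normalized Chebyshev polynomials of the second kind. -/
noncomputable def S : ℕ → Polynomial ℂ
  | 0 => 1
  | 1 => Polynomial.X
  | (k+2) => Polynomial.X * S (k+1) - S k

theorem S_eval_two_cos_mul_sin (t : ℂ) (j : ℕ) :
    (S j).eval (2 * Complex.cos t) * Complex.sin t = Complex.sin ((j + 1) * t) := by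
  induction j using Nat.twoStepInduction with
  | zero => simp [S]
  | one =>
    norm_num [S, Complex.sin_two_mul]
    ring
  | more j ih₀ ih₁ =>
    simp only [S, eval_sub, eval_mul, eval_X]
    have h₂ : ((j + 2 : ℕ) + 1 : ℂ) * t = ((j + 1 : ℕ) + 1 : ℂ) * t + t := by push_cast; ring
    have h₀ : ((j : ℂ) + 1) * t = ((j + 1 : ℕ) + 1 : ℂ) * t - t := by push_cast; ring
    rw [h₂, Complex.sin_add]
    rw [h₀, Complex.sin_sub] at ih₀
    linear_combination 2 * Complex.cos t * ih₁ - ih₀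

theorem stmt_17 (n k : ℕ) (hn : 2 ≤ n) (hk1 : 1 ≤ k) (hk : k ≤ n - 1)
    (P : ℕ → Polynomial ℂ)
    (hP : ∀ j : ℕ, (Polynomial.X - Polynomial.C 2) * P j = S (j + 1) - S j - 1)
    (v₀ : ℂ) (hv₀ : v₀ = ((2 * Real.cos (k * Real.pi / n) : ℝ) : ℂ)) :
    ∀ x y z : ℂ, x ^ 2 + y ^ 2 + z ^ 2 - x * y * z - 2 = v₀ →
      ((Even k →
          (2 - x - y + z) * (S (n - 1)).eval v₀ + (4 - 2 * x - 2 * y + x * y) * (P (n - 2)).eval v₀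
            = 0) ∧
       (Odd k →
          ((2 - x - y + z) * (S (n - 1)).eval v₀ + (4 - 2 * x - 2 * y + x * y) * (P (n - 2)).eval v₀
            = 0 ↔ x = 2 ∨ y = 2))) := by
  
  have hn0 : (0 : ℝ) < n := by positivity
  set θ : ℝ := k * Real.pi / n with hθ
  have hnθ : (n : ℝ) * θ = k * Real.pi := by rw [hθ]; field_simp
  have hkpos : (0 : ℝ) < k := by exact_mod_cast hk1
  have hkn : (k : ℝ) < n := by exact_mod_cast (by omega : k < n)
  have hsinR : 0 < Real.sin θ := by
    apply Real.sin_pos_of_pos_of_lt_pi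
    · have := Real.pi_pos
      positivity
    · rw [hθ, div_lt_iff₀ hn0]
      nlinarith [Real.pi_pos]
  have hsin : Complex.sin (θ : ℂ) ≠ 0 := by
    rw [← Complex.ofReal_sin]
    exact_mod_cast hsinR.ne'
  have hv : v₀ = 2 * Complex.cos (θ : ℂ) := by rw [hv₀]; push_cast; rfl
  have hv2 : v₀ - 2 ≠ 0 := by
    intro h
    have hc : Complex.cos (θ : ℂ) = 1 := by linear_combination (h - hv) / 2
    have hs := Complex.sin_sq_add_cos_sq (θ : ℂ)
    rw [hc] at hs
    exact hsin (pow_eq_zero_iff two_ne_zero |>.1 (by linear_combination hs))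
  obtain ⟨m, rfl⟩ : ∃ m, n = m + 2 := ⟨n - 2, by omega⟩
  rw [show m + 2 - 1 = m + 1 by omega, show m + 2 - 2 = m by omega]
  have hnθC : ((m : ℂ) + 2) * θ = k * Real.pi := by exact_mod_cast hnθ
  have hS1 : (S (m + 1)).eval v₀ = 0 := by
    have h := S_eval_two_cos_mul_sin θ (m + 1)
    rw [← hv, show (((m + 1 : ℕ) : ℂ) + 1) * θ = k * Real.pi by
      rw [← hnθC]; push_cast; ring, Complex.sin_nat_mul_pi] at h
    exact (mul_eq_zero.1 h).resolve_right hsin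
  have hS0 : (S m).eval v₀ = -(-1) ^ k := by
    have h := S_eval_two_cos_mul_sin θ m
    rw [← hv, show ((m : ℂ) + 1) * θ = k * Real.pi - θ by rw [← hnθC]; ring,
      Complex.sin_sub, Complex.sin_nat_mul_pi,
      show Complex.cos (k * Real.pi) = (-1) ^ k by
        exact_mod_cast congrArg Complex.ofReal (Real.cos_nat_mul_pi k)] at h
    exact mul_right_cancel₀ hsin (by linear_combination h)
  have hPv : (v₀ - 2) * (P m).eval v₀ = (-1) ^ k - 1 := by
    have h := congrArg (Polynomial.eval v₀) (hP m)
    simp only [eval_mul, eval_sub, eval_X, eval_C, eval_one, hS1, hS0] at h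
    linear_combination h
  intro x y z _
  rw [hS1]
  refine ⟨fun he => ?_, fun ho => ?_⟩
  · rw [he.neg_one_pow, sub_self] at hPv
    rw [(mul_eq_zero.1 hPv).resolve_left hv2]
    ring
  · rw [ho.neg_one_pow] at hPv
    have hP0 : (P m).eval v₀ ≠ 0 := by
      intro h
      rw [h] at hPv
      norm_num at hPv
    rw [show (2 - x - y + z) * 0 + (4 - 2 * x - 2 * y + x * y) * (P m).eval v₀
      = (x - 2) * (y - 2) * (P m).eval v₀ by ring]
    simp [hP0, sub_eq_zero]
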